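/- Elementary double negation for the graph semantics: for any unit graph chain G of the form G₀ ⋗ G₁ ⋗ ⋯ ⋗ G_k (k ∈ ℕ, with G_k a literal) and any valuation frame M of the second ('graph') semantics, it holds that [M ⊨ G] = [M ⊨ recursiveReduce2(recursiveReduce2(G))]. -/

import Mathlib

/-! The proof evaluates formulas relative to a context of terms: `M.eval ts F` reads `F` after the
prefix `ts`, with `eval ts (H ⋗ T) = min (eval ts H) (eval (ts.⟨map H⟩) T)`, which is the frame
condition on sequences. In every context `recursiveReduce2` acts as Boolean complementation on
the formulas concerned (`Expanded.eval_rr2`): distributing `H ⋗ -` over ∧ and ∨ does not change the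
value, and `max (1 - h) (min h (1 - t)) = 1 - min h t` for `h, t ∈ {0, 1}`. Applying it twice gives
back the original value.

On formulas whose chains contain neither ∨ nor ¬, evaluation in the empty context is the given
valuation (`Expanded.val_eq_eval`). Unit graph chains are of this kind, and the class is closed
under `recursiveReduce2` (`Expanded.rr2`), so the computation transfers to `M.val`. -/

namespace GraphGradual

/-- Formulas of the second ('graph') gradual logic: F ::= a | F ∧ F | F ∨ F | ¬F | F ⋗ F. -/
inductive GGF (A : Type) : Type
  | lit : A → GGF A
  | conj : GGF A → GGF A → GGF A
  | disj : GGF A → GGF A → GGF A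
  | neg  : GGF A → GGF A
  | obat : GGF A → GGF A → GGF A

/-- Unit chains of literals a₀ ⋗ a₁ ⋗ ⋯ ⋗ a_k (right-associated). -/
inductive LitChain {A : Type} : GGF A → Prop
  | base (a b : A) : LitChain (GGF.obat (GGF.lit a) (GGF.lit b))
  | cons (a : A) {F : GGF A} : LitChain F → LitChain (GGF.obat (GGF.lit a) F)

mutual
  /-- Unit graph chains. -/
  inductive UGC {A : Type} : GGF A → Prop
    | ofLitChain {F : GGF A} : LitChain F → UGC F
    | snoc {G : GGF A} (a : A) : UGC G → UGC (GGF.obat G (GGF.lit a))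
    | conj {G₁ G₂ : GGF A} (a : A) :
        LitOrUGC G₁ → LitOrUGC G₂ → UGC (GGF.obat (GGF.conj G₁ G₂) (GGF.lit a))
  /-- Formulas that are a literal or a unit graph chain. -/
  inductive LitOrUGC {A : Type} : GGF A → Prop
    | lit (a : A) : LitOrUGC (GGF.lit a)
    | chain {F : GGF A} : UGC F → LitOrUGC F
end

/-- Unit graph expansion: built from literals and unit graph chains using only ∧ and ∨. -/
inductive UGE {A : Type} : GGF A → Prop
  | lit (a : A) : UGE (GGF.lit a)
  | chain {F : GGF A} : UGC F → UGE F
  | conj {F G : GGF A} : UGE F → UGE G → UGE (GGF.conj F G)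
  | disj {F G : GGF A} : UGE F → UGE G → UGE (GGF.disj F G)

/-- `AndOf l F`: F is some ∧-association of the (nonempty) list l of formulas. -/
inductive AndOf {A : Type} : List (GGF A) → GGF A → Prop
  | single (F : GGF A) : AndOf [F] F
  | node {l₁ l₂ : List (GGF A)} {F₁ F₂ : GGF A} :
      AndOf l₁ F₁ → AndOf l₂ F₂ → AndOf (l₁ ++ l₂) (GGF.conj F₁ F₂)

/-- `OrOf l F`: F is some ∨-association of the (nonempty) list l of formulas. -/
inductive OrOf {A : Type} : List (GGF A) → GGF A → Prop
  | single (F : GGF A) : OrOf [F] F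
  | node {l₁ l₂ : List (GGF A)} {F₁ F₂ : GGF A} :
      OrOf l₁ F₁ → OrOf l₂ F₂ → OrOf (l₁ ++ l₂) (GGF.disj F₁ F₂)

/-- Right-nested conjunction F ∧ (G₀ ∧ (G₁ ∧ ⋯)). -/
def bigAnd {A : Type} : GGF A → List (GGF A) → GGF A
  | F, [] => F
  | F, G :: l => GGF.conj F (bigAnd G l)

/-- Right-nested disjunction F ∨ (G₀ ∨ (G₁ ∨ ⋯)). -/
def bigOr {A : Type} : GGF A → List (GGF A) → GGF A
  | F, [] => F
  | F, G :: l => GGF.disj F (bigOr G l)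

/-- `(⋀ m) ⋗ F` for a nonempty list m (default F on the empty list, never used). -/
def mkConj {A : Type} (F : GGF A) : List (GGF A) → GGF A
  | [] => F
  | G :: l => GGF.obat (bigAnd G l) F

/-- Disjunction of a nonempty list (default d on the empty list, never used). -/
def bigOrList {A : Type} (d : GGF A) : List (GGF A) → GGF A
  | [] => d
  | G :: l => bigOr G l

/-- One-step reduction of the graph gradual logic. -/
inductive GStep {A : Type} (c : A → A) : GGF A → GGF A → Prop
  | neg1 (a : A) : GStep c (GGF.neg (GGF.lit a)) (GGF.lit (c a))
  | neg2 (F₁ F₂ : GGF A) :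
      GStep c (GGF.neg (GGF.conj F₁ F₂)) (GGF.disj (GGF.neg F₁) (GGF.neg F₂))
  | neg3 (F₁ F₂ : GGF A) :
      GStep c (GGF.neg (GGF.disj F₁ F₂)) (GGF.conj (GGF.neg F₁) (GGF.neg F₂))
  | neg4 {G : GGF A} {l : List (GGF A)} {H : GGF A} (F₂ : GGF A)
      (hl : ∀ X ∈ (G :: l), LitOrUGC X) (hH : AndOf (G :: l) H) :
      GStep c (GGF.neg (GGF.obat H F₂))
        (bigOr (GGF.neg G) (l.map GGF.neg ++ [GGF.obat H (GGF.neg F₂)]))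
  | ob3 {l : List (GGF A)} {L : GGF A} (F : GGF A)
      (hlen : 2 ≤ l.length) (hl : ∀ X ∈ l, LitOrUGC X) (hL : OrOf l L) :
      GStep c (GGF.obat L F)
        (bigOrList F ((l.sublists.filter (fun m => !m.isEmpty)).map (mkConj F)))
  | ob4 (F₁ F₂ F₃ : GGF A) :
      GStep c (GGF.obat F₁ (GGF.conj F₂ F₃)) (GGF.conj (GGF.obat F₁ F₂) (GGF.obat F₁ F₃))
  | ob5 (F₁ F₂ F₃ : GGF A) :
      GStep c (GGF.obat F₁ (GGF.disj F₂ F₃)) (GGF.disj (GGF.obat F₁ F₂) (GGF.obat F₁ F₃))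
  | objD1 (F₁ F₂ F₃ F₄ : GGF A) :
      GStep c (GGF.obat (GGF.conj F₁ (GGF.disj F₂ F₃)) F₄)
        (GGF.obat (GGF.disj (GGF.conj F₁ F₂) (GGF.conj F₁ F₃)) F₄)
  | objD2 (F₁ F₂ F₃ F₄ : GGF A) :
      GStep c (GGF.obat (GGF.conj (GGF.disj F₁ F₂) F₃) F₄)
        (GGF.obat (GGF.disj (GGF.conj F₁ F₃) (GGF.conj F₂ F₃)) F₄)
  | conj_left {F F' : GGF A} (G : GGF A) :
      GStep c F F' → GStep c (GGF.conj F G) (GGF.conj F' G)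
  | conj_right (F : GGF A) {G G' : GGF A} :
      GStep c G G' → GStep c (GGF.conj F G) (GGF.conj F G')
  | disj_left {F F' : GGF A} (G : GGF A) :
      GStep c F F' → GStep c (GGF.disj F G) (GGF.disj F' G)
  | disj_right (F : GGF A) {G G' : GGF A} :
      GStep c G G' → GStep c (GGF.disj F G) (GGF.disj F G')
  | neg_congr {F F' : GGF A} :
      GStep c F F' → GStep c (GGF.neg F) (GGF.neg F')
  | obat_left {F F' : GGF A} (G : GGF A) :
      GStep c F F' → GStep c (GGF.obat F G) (GGF.obat F' G)
  | obat_right (F : GGF A) {G G' : GGF A} :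
      GStep c G G' → GStep c (GGF.obat F G) (GGF.obat F G')

/-- `GReduces c F G`: F ↦* G in finitely many (possibly zero) steps. -/
def GReduces {A : Type} (c : A → A) : GGF A → GGF A → Prop :=
  Relation.ReflTransGen (GStep c)

/-- Distribute `H ⋗ -` over the ∧/∨-structure of a formula (⋗-reductions 4 and 5). -/
def dist2 {A : Type} (H : GGF A) : GGF A → GGF A
  | GGF.conj F G => GGF.conj (dist2 H F) (dist2 H G)
  | GGF.disj F G => GGF.disj (dist2 H F) (dist2 H G)
  | F => GGF.obat H F

/-- recursiveReduce2 on formulas in unit graph expansion: swap ∧/∨ outside chains,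
complement the non-chain literals, replace each maximal chain with head H and tail T
by recursiveReduce2 H ∨ (H ⋗ recursiveReduce2 T), reduced into unit graph expansion
via ⋗-reductions 4 and 5. -/
def rr2 {A : Type} (c : A → A) : GGF A → GGF A
  | GGF.lit a => GGF.lit (c a)
  | GGF.conj F G => GGF.disj (rr2 c F) (rr2 c G)
  | GGF.disj F G => GGF.conj (rr2 c F) (rr2 c G)
  | GGF.obat H T => GGF.disj (rr2 c H) (dist2 H (rr2 c T))
  | GGF.neg F => GGF.neg F

/-- Terms 𝒯 of the graph semantics: {a}, ⟨a⟩, {t}, ⟨t⟩, {t₁,t₂}, ⟨t₁⟩.⟨t₂⟩. -/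
inductive GT (A : Type) : Type
  | atom : A → GT A
  | brace : GT A → GT A
  | pair : GT A → GT A → GT A
  | ang : GT A → GT A
  | seq : GT A → GT A → GT A

/-- The congruence ≐ on terms: braces unordered and idempotent, {{t}} ≐ {t},
⟨⟨t⟩⟩ ≐ ⟨t⟩, closed under all term constructors. -/
inductive GT.Eqv {A : Type} : GT A → GT A → Prop
  | refl (t : GT A) : GT.Eqv t t
  | symm {t u : GT A} : GT.Eqv t u → GT.Eqv u t
  | trans {t u v : GT A} : GT.Eqv t u → GT.Eqv u v → GT.Eqv t v
  | brace_brace (t : GT A) : GT.Eqv (GT.brace (GT.brace t)) (GT.brace t)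
  | ang_ang (t : GT A) : GT.Eqv (GT.ang (GT.ang t)) (GT.ang t)
  | pair_comm (t u : GT A) : GT.Eqv (GT.pair t u) (GT.pair u t)
  | pair_idem (t : GT A) : GT.Eqv (GT.pair t t) (GT.brace t)
  | brace_congr {t u : GT A} : GT.Eqv t u → GT.Eqv (GT.brace t) (GT.brace u)
  | ang_congr {t u : GT A} : GT.Eqv t u → GT.Eqv (GT.ang t) (GT.ang u)
  | pair_congr {t t' u u' : GT A} :
      GT.Eqv t t' → GT.Eqv u u' → GT.Eqv (GT.pair t u) (GT.pair t' u')
  | seq_congr {t t' u u' : GT A} :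
      GT.Eqv t t' → GT.Eqv u u' → GT.Eqv (GT.seq t u) (GT.seq t' u')

/-- map: map(a) = ⟨a⟩ (in compressed form, the bare atom), map(G₀ ∧ G₁) = {map G₀, map G₁},
map(G₀ ⋗ G₁) = ⟨map G₀⟩.⟨map G₁⟩.  (Junk on ∨ and ¬, never used.) -/
def gmap {A : Type} : GGF A → GT A
  | GGF.lit a => GT.atom a
  | GGF.conj F G => GT.pair (gmap F) (gmap G)
  | GGF.obat F G => GT.seq (gmap F) (gmap G)
  | GGF.disj F G => GT.pair (gmap F) (gmap G)
  | GGF.neg F => GT.brace (gmap F)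

/-- A valuation frame of the graph semantics: a local interpretation I on contexts
from 𝒯* and a global interpretation J on nonempty sequences over 𝒯, subject to the
conditions of Definition 15 (J of a sequence term is the conjunction of the global
values of its prefixes, braces split conjunctively, J(t*.a) = I(t*,a), and J is
invariant under the congruence ≐). -/
structure GFrame (A : Type) (c : A → A) where
  I : List (GT A) → A → ℕ
  I01 : ∀ ts a, I ts a = 0 ∨ I ts a = 1
  Icompl : ∀ ts a, I ts (c a) = 1 - I ts a
  J : List (GT A) → ℕ
  J01 : ∀ l, J l = 0 ∨ J l = 1
  Jatom : ∀ ts a, J (ts ++ [GT.atom a]) = I ts a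
  Jbrace : ∀ ts t, J (ts ++ [GT.brace t]) = J (ts ++ [t])
  Jpair : ∀ ts t u, J (ts ++ [GT.pair t u]) = min (J (ts ++ [t])) (J (ts ++ [u]))
  Jseq : ∀ ts t u, J (ts ++ [GT.seq t u]) = min (J (ts ++ [t])) (J (ts ++ [GT.ang t, u]))
  Jcong : ∀ (l l' : List (GT A)), List.Forall₂ GT.Eqv l l' → J l = J l'

/-- `[M ⊨ F]` for F in unit graph expansion: a literal or unit graph chain G gets
J(compress(map G)); ∧ is min and ∨ is max. -/
def GFrame.val {A : Type} {c : A → A} (M : GFrame A c) : GGF A → ℕ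
  | GGF.lit a => M.I [] a
  | GGF.conj F G => min (M.val F) (M.val G)
  | GGF.disj F G => max (M.val F) (M.val G)
  | GGF.neg _ => 0
  | GGF.obat F G => M.J [gmap (GGF.obat F G)]

/-- The shape pairs of the bisimulation theorem for the graph logic. -/
inductive ShapePair2 {A : Type} (c : A → A) : GGF A → GGF A → Prop
  | sp1 {l : List (GGF A)} {L : GGF A} (Fc : GGF A)
      (hlen : 2 ≤ l.length) (hl : ∀ X ∈ l, LitOrUGC X) (hL : OrOf l L) :
      ShapePair2 c (GGF.obat L Fc)
        (bigOrList Fc ((l.sublists.filter (fun m => !m.isEmpty)).map (mkConj Fc)))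
  | sp2 (Fa Fb Fc : GGF A) :
      ShapePair2 c (GGF.obat Fa (GGF.conj Fb Fc)) (GGF.conj (GGF.obat Fa Fb) (GGF.obat Fa Fc))
  | sp3 (Fa Fb Fc : GGF A) :
      ShapePair2 c (GGF.obat Fa (GGF.disj Fb Fc)) (GGF.disj (GGF.obat Fa Fb) (GGF.obat Fa Fc))
  | sp4 (Fa Fb Fc Fd : GGF A) :
      ShapePair2 c (GGF.obat (GGF.conj Fa (GGF.disj Fb Fc)) Fd)
        (GGF.obat (GGF.disj (GGF.conj Fa Fb) (GGF.conj Fa Fc)) Fd)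
  | sp5 (Fa Fb Fc Fd : GGF A) :
      ShapePair2 c (GGF.obat (GGF.conj (GGF.disj Fa Fb) Fc) Fd)
        (GGF.obat (GGF.disj (GGF.conj Fa Fc) (GGF.conj Fb Fc)) Fd)
  | sp6 {G : GGF A} (hG : LitOrUGC G) :
      ShapePair2 c (GGF.neg G) (rr2 c G)
  | sp7 (Fa Fb : GGF A) :
      ShapePair2 c (GGF.neg (GGF.conj Fa Fb)) (GGF.disj (GGF.neg Fa) (GGF.neg Fb))
  | sp8 (Fa Fb : GGF A) :
      ShapePair2 c (GGF.neg (GGF.disj Fa Fb)) (GGF.conj (GGF.neg Fa) (GGF.neg Fb))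
  | sp9 {G : GGF A} {l : List (GGF A)} {H : GGF A} (Fa : GGF A)
      (hl : ∀ X ∈ (G :: l), LitOrUGC X) (hH : AndOf (G :: l) H) :
      ShapePair2 c (GGF.neg (GGF.obat H Fa))
        (bigOr (GGF.neg G) (l.map GGF.neg ++ [GGF.obat H (GGF.neg Fa)]))
  | sp10 (Fa : GGF A) : ShapePair2 c (GGF.disj Fa Fa) Fa
  | sp11 (Fa : GGF A) : ShapePair2 c (GGF.conj Fa Fa) Fa
  | sp12 (Fa Fb : GGF A) : ShapePair2 c (GGF.disj Fa Fb) (GGF.disj Fb Fa)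
  | sp13 (Fa Fb Fc : GGF A) :
      ShapePair2 c (GGF.disj Fa (GGF.disj Fb Fc)) (GGF.disj (GGF.disj Fa Fb) Fc)
  | sp14 (Fa Fb : GGF A) : ShapePair2 c (GGF.conj Fa Fb) (GGF.conj Fb Fa)
  | sp15 (Fa Fb Fc : GGF A) :
      ShapePair2 c (GGF.conj Fa (GGF.conj Fb Fc)) (GGF.conj (GGF.conj Fa Fb) Fc)

/-- `ReplaceAt2 R F F'`: F' is obtained from F by replacing one occurrence of a
subformula related by R (in either direction). -/
inductive ReplaceAt2 {A : Type} (R : GGF A → GGF A → Prop) : GGF A → GGF A → Prop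
  | here {F F' : GGF A} : R F F' → ReplaceAt2 R F F'
  | here_rev {F F' : GGF A} : R F' F → ReplaceAt2 R F F'
  | conj_left {F F' : GGF A} (G : GGF A) :
      ReplaceAt2 R F F' → ReplaceAt2 R (GGF.conj F G) (GGF.conj F' G)
  | conj_right (F : GGF A) {G G' : GGF A} :
      ReplaceAt2 R G G' → ReplaceAt2 R (GGF.conj F G) (GGF.conj F G')
  | disj_left {F F' : GGF A} (G : GGF A) :
      ReplaceAt2 R F F' → ReplaceAt2 R (GGF.disj F G) (GGF.disj F' G)
  | disj_right (F : GGF A) {G G' : GGF A} :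
      ReplaceAt2 R G G' → ReplaceAt2 R (GGF.disj F G) (GGF.disj F G')
  | neg_congr {F F' : GGF A} :
      ReplaceAt2 R F F' → ReplaceAt2 R (GGF.neg F) (GGF.neg F')
  | obat_left {F F' : GGF A} (G : GGF A) :
      ReplaceAt2 R F F' → ReplaceAt2 R (GGF.obat F G) (GGF.obat F' G)
  | obat_right (F : GGF A) {G G' : GGF A} :
      ReplaceAt2 R G G' → ReplaceAt2 R (GGF.obat F G) (GGF.obat F G')

/-- Formulas built from literals by ∧ and ⋗ only; every literal and unit graph chain is one. -/
inductive Pure {A : Type} : GGF A → Prop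
  | lit (a : A) : Pure (GGF.lit a)
  | conj {F G : GGF A} : Pure F → Pure G → Pure (GGF.conj F G)
  | obat {F G : GGF A} : Pure F → Pure G → Pure (GGF.obat F G)

/-- Combinations under ∧ and ∨ of literals and of chains `H ⋗ T` free of ∨ and ¬. This relaxes
unit graph expansion, so that closure under `rr2` needs no analysis of the shape of tails. -/
inductive Expanded {A : Type} : GGF A → Prop
  | lit (a : A) : Expanded (GGF.lit a)
  | conj {F G : GGF A} : Expanded F → Expanded G → Expanded (GGF.conj F G)
  | disj {F G : GGF A} : Expanded F → Expanded G → Expanded (GGF.disj F G)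
  | obat {F G : GGF A} : Pure F → Pure G → Expanded (GGF.obat F G)

theorem LitChain.pure {A : Type} {F : GGF A} (h : LitChain F) : Pure F := by
  induction h with
  | base a b => exact .obat (.lit a) (.lit b)
  | cons a _ ih => exact .obat (.lit a) ih

mutual
theorem UGC.pure {A : Type} {F : GGF A} : UGC F → Pure F
  | .ofLitChain h => h.pure
  | .snoc a h => .obat h.pure (.lit a)
  | .conj a h₁ h₂ => .obat (.conj h₁.pure h₂.pure) (.lit a)

theorem LitOrUGC.pure {A : Type} {F : GGF A} : LitOrUGC F → Pure F
  | .lit a => .lit a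
  | .chain h => h.pure
end

theorem Pure.expanded {A : Type} {F : GGF A} (h : Pure F) : Expanded F := by
  induction h with
  | lit a => exact .lit a
  | conj _ _ ih₁ ih₂ => exact .conj ih₁ ih₂
  | obat h₁ h₂ _ _ => exact .obat h₁ h₂

theorem Expanded.dist2 {A : Type} {H F : GGF A} (hH : Pure H) (h : Expanded F) :
    Expanded (GraphGradual.dist2 H F) := by
  induction h with
  | lit a => exact .obat hH (.lit a)
  | conj _ _ ih₁ ih₂ => exact .conj ih₁ ih₂
  | disj _ _ ih₁ ih₂ => exact .disj ih₁ ih₂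
  | obat h₁ h₂ => exact .obat hH (.obat h₁ h₂)

theorem Pure.rr2 {A : Type} (c : A → A) {F : GGF A} (h : Pure F) :
    Expanded (GraphGradual.rr2 c F) := by
  induction h with
  | lit a => exact .lit (c a)
  | conj _ _ ih₁ ih₂ => exact .disj ih₁ ih₂
  | obat h₁ _ ih₁ ih₂ => exact .disj ih₁ (ih₂.dist2 h₁)

theorem Expanded.rr2 {A : Type} (c : A → A) {F : GGF A} (h : Expanded F) :
    Expanded (GraphGradual.rr2 c F) := by
  induction h with
  | lit a => exact .lit (c a)
  | conj _ _ ih₁ ih₂ => exact .disj ih₁ ih₂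
  | disj _ _ ih₁ ih₂ => exact .conj ih₁ ih₂
  | obat h₁ h₂ => exact (Pure.obat h₁ h₂).rr2 c

/-- The value of a formula in the context `ts`; the tail of a chain is evaluated in the context
extended by the term `⟨map H⟩` of its head. The value on ¬ is junk. -/
def GFrame.eval {A : Type} {c : A → A} (M : GFrame A c) : List (GT A) → GGF A → ℕ
  | ts, GGF.lit a => M.I ts a
  | ts, GGF.conj F G => min (M.eval ts F) (M.eval ts G)
  | ts, GGF.disj F G => max (M.eval ts F) (M.eval ts G)
  | _, GGF.neg _ => 0
  | ts, GGF.obat F G => min (M.eval ts F) (M.eval (ts ++ [GT.ang (gmap F)]) G)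

theorem Pure.eval_eq_J {A : Type} {c : A → A} (M : GFrame A c) {F : GGF A} (h : Pure F) :
    ∀ ts, M.eval ts F = M.J (ts ++ [gmap F]) := by
  induction h with
  | lit a => intro ts; simp [GFrame.eval, gmap, M.Jatom]
  | conj _ _ ih₁ ih₂ => intro ts; simp [GFrame.eval, gmap, M.Jpair, ih₁, ih₂]
  | obat _ _ ih₁ ih₂ => intro ts; simp [GFrame.eval, gmap, M.Jseq, ih₁, ih₂]

theorem Expanded.val_eq_eval {A : Type} {c : A → A} (M : GFrame A c) {F : GGF A}
    (h : Expanded F) : M.val F = M.eval [] F := by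
  induction h with
  | lit a => rfl
  | conj _ _ ih₁ ih₂ => simp [GFrame.eval, GFrame.val, ih₁, ih₂]
  | disj _ _ ih₁ ih₂ => simp [GFrame.eval, GFrame.val, ih₁, ih₂]
  | obat h₁ h₂ => rw [(Pure.obat h₁ h₂).eval_eq_J]; rfl

theorem GFrame.eval_le_one {A : Type} {c : A → A} (M : GFrame A c) (F : GGF A) :
    ∀ ts, M.eval ts F ≤ 1 := by
  induction F with
  | lit a => intro ts; have := M.I01 ts a; simp only [GFrame.eval]; omega
  | conj F G ih₁ ih₂ => intro ts; have := ih₁ ts; simp only [GFrame.eval]; omega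
  | disj F G ih₁ ih₂ =>
    intro ts; have := ih₁ ts; have := ih₂ ts; simp only [GFrame.eval]; omega
  | neg F _ => intro ts; simp [GFrame.eval]
  | obat F G ih₁ ih₂ => intro ts; have := ih₁ ts; simp only [GFrame.eval]; omega

/-- Reductions 4 and 5 preserve the value: `dist2 H F` is evaluated like `H ⋗ F`. -/
theorem GFrame.eval_dist2 {A : Type} {c : A → A} (M : GFrame A c) (H F : GGF A)
    (ts : List (GT A)) : M.eval ts (dist2 H F) = M.eval ts (GGF.obat H F) := by
  induction F with
  | lit a => rfl
  | conj F G ih₁ ih₂ => simp only [GFrame.eval, dist2] at ih₁ ih₂ ⊢; omega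
  | disj F G ih₁ ih₂ => simp only [GFrame.eval, dist2] at ih₁ ih₂ ⊢; omega
  | neg F _ => rfl
  | obat F G _ _ => rfl

theorem Pure.eval_rr2 {A : Type} {c : A → A} (M : GFrame A c) {F : GGF A} (h : Pure F) :
    ∀ ts, M.eval ts (GraphGradual.rr2 c F) = 1 - M.eval ts F := by
  induction h with
  | lit a => intro ts; exact M.Icompl ts a
  | conj _ _ ih₁ ih₂ =>
    intro ts
    simp only [GFrame.eval, GraphGradual.rr2, ih₁, ih₂]; omega
  | @obat H T _ _ ih₁ ih₂ =>
    intro ts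
    have hH := M.eval_le_one H ts
    simp only [GFrame.eval, GraphGradual.rr2, M.eval_dist2, ih₁, ih₂]
    omega

/-- `rr2` is Boolean complementation in every context. `Expanded` is the generality needed to
apply this to the outer as well as the inner occurrence of `rr2`. -/
theorem Expanded.eval_rr2 {A : Type} {c : A → A} (M : GFrame A c) {F : GGF A}
    (h : Expanded F) (ts : List (GT A)) :
    M.eval ts (GraphGradual.rr2 c F) = 1 - M.eval ts F := by
  induction h with
  | lit a => exact M.Icompl ts a
  | conj _ _ ih₁ ih₂ => simp only [GFrame.eval, GraphGradual.rr2, ih₁, ih₂]; omega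
  | disj _ _ ih₁ ih₂ => simp only [GFrame.eval, GraphGradual.rr2, ih₁, ih₂]; omega
  | obat h₁ h₂ => exact (Pure.obat h₁ h₂).eval_rr2 M ts

/-- Elementary double negation, graph semantics: for any unit
graph chain (or literal) G and any valuation frame M of the graph semantics,
[M ⊨ G] = [M ⊨ recursiveReduce2 (recursiveReduce2 G)]. -/
theorem graph_elementary_double_negation (A : Type) [Countable A] [Infinite A]
    (c : A → A) (hc : Function.Involutive c)
    (G : GGF A) (hG : LitOrUGC G) (M : GFrame A c) :
    M.val G = M.val (rr2 c (rr2 c G)) := by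
  have hF := hG.pure.expanded
  have h1 := M.eval_le_one G []
  rw [hF.val_eq_eval, ((hF.rr2 c).rr2 c).val_eq_eval, (hF.rr2 c).eval_rr2, hF.eval_rr2]
  omega

end GraphGradual
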